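/- For every x ∈ ℝ, −(1/(2π)) ∫_ℝ e^{−itx} e^{−|t|} |t| log|t| dt = [ ((1−x²)/(1+x²))( (1/2) log(1+x²) − 1 + γ ) + (2x/(1+x²)) arctan x ] · (1/(π(1+x²))), where γ is the Euler–Mascheroni constant. Equivalently, the maximum-likelihood score in the characteristic exponent α at the Cauchy point α = 1 is h_α(x) = ((1−x²)/(1+x²))((1/2)log(1+x²) − 1 + γ) + (2x/(1+x²)) arctan x. -/

import Mathlib

open MeasureTheory Real

/-!
Differentiating the Mellin transform `∫₀^∞ t^(s-1) e^{-zt} dt = z^{-s} Γ(s)` in `s` inserts a factor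
`log t`, so `∫₀^∞ t^(s-1) log t e^{-zt} dt = z^{-s} (Γ'(s) - Γ(s) log z)` on `Re z > 0`. The first
formula is classical for real `z > 0` and extends by analytic continuation. Splitting the Fourier
integral at `0` produces the two values `z = 1 ± ix` at `s = 2`, where `Γ(2) = 1` and
`Γ'(2) = 1 - γ`; moreover `log (1 ± ix) = log (1 + x²) / 2 ± i arctan x`.
-/

open Set Filter Topology Asymptotics

section AnalyticContinuation

variable {E : Type*} [NormedAddCommGroup E] [NormedSpace ℂ E]

lemma eqOn_re_pos_of_eq_on_ofReal_pos [CompleteSpace E] {f g : ℂ → E}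
    (hf : DifferentiableOn ℂ f {z | 0 < z.re}) (hg : DifferentiableOn ℂ g {z | 0 < z.re})
    (hfg : ∀ r : ℝ, 0 < r → f r = g r) : EqOn f g {z | 0 < z.re} := by
  have hconn : IsPreconnected {z : ℂ | 0 < z.re} := (convex_halfSpace_re_gt 0).isPreconnected
  refine (hf.analyticOnNhd (Complex.isOpen_re_gt 0)).eqOn_of_preconnected_of_frequently_eq
    (hg.analyticOnNhd (Complex.isOpen_re_gt 0)) hconn (z₀ := 1) (by simp) ?_
  have htendsto : Tendsto ((↑) : ℝ → ℂ) (𝓝[≠] 1) (𝓝[≠] 1) := by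
    simpa using (hasDerivAt_id (1 : ℝ)).ofReal_comp.tendsto_nhdsNE (by simp)
  have hpos : ∀ᶠ r : ℝ in 𝓝[≠] 1, 0 < r := nhdsWithin_le_nhds (lt_mem_nhds one_pos)
  exact htendsto.frequently (hpos.mono hfg).frequently

lemma norm_exp_neg_mul_smul_le {c d t : ℝ} {w : ℂ} (hcd : c < d) (hdw : d ≤ w.re) (ht : 0 ≤ t)
    (v : E) :
    ‖(Complex.exp (-(w * t)) * -(t : ℂ)) • v‖ ≤ (d - c)⁻¹ * ‖Real.exp (-(c * t)) • v‖ := by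
  have hlin : t ≤ (d - c)⁻¹ * Real.exp ((d - c) * t) := by
    rw [le_inv_mul_iff₀ (sub_pos.2 hcd)]
    linarith [Real.add_one_le_exp ((d - c) * t)]
  have hexp : Real.exp (-(w.re * t)) ≤ Real.exp (-(d * t)) := by gcongr
  calc ‖(Complex.exp (-(w * t)) * -(t : ℂ)) • v‖
      = t * Real.exp (-(w.re * t)) * ‖v‖ := by
        simp [norm_smul, Complex.norm_exp, abs_of_nonneg ht, mul_comm]
    _ ≤ (d - c)⁻¹ * Real.exp ((d - c) * t) * Real.exp (-(d * t)) * ‖v‖ := by gcongr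
    _ = (d - c)⁻¹ * ‖Real.exp (-(c * t)) • v‖ := by
        rw [mul_assoc (d - c)⁻¹, ← Real.exp_add, norm_smul, Real.norm_eq_abs, Real.abs_exp,
          mul_assoc]
        ring_nf

lemma differentiableAt_integral_exp_neg_mul_smul {φ : ℝ → E} {c : ℝ} {z : ℂ}
    (hφ : IntegrableOn (fun t => Real.exp (-(c * t)) • φ t) (Ioi 0)) (hcz : c < z.re) :
    DifferentiableAt ℂ (fun w : ℂ => ∫ t : ℝ in Ioi 0, Complex.exp (-(w * t)) • φ t) z := by
  obtain ⟨d, hcd, hdz⟩ := exists_between hcz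
  have hhalf : {w : ℂ | d < w.re} ∈ 𝓝 z := (Complex.isOpen_re_gt d).mem_nhds hdz
  have hφm : AEStronglyMeasurable φ (volume.restrict (Ioi 0)) := by
    have hcont : Continuous fun t : ℝ => Real.exp (c * t) := by fun_prop
    refine (hcont.aestronglyMeasurable.smul hφ.aestronglyMeasurable).congr (.of_forall fun t => ?_)
    simp [smul_smul, ← Real.exp_add]
  have hmeas (w : ℂ) : AEStronglyMeasurable (fun t : ℝ => Complex.exp (-(w * t)) • φ t)
      (volume.restrict (Ioi 0)) :=
    (by fun_prop : Continuous fun t : ℝ => Complex.exp (-(w * t))).aestronglyMeasurable.smul hφm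
  have hint : IntegrableOn (fun t : ℝ => Complex.exp (-(z * t)) • φ t) (Ioi 0) := by
    refine Integrable.mono hφ (hmeas z) <|
      (ae_restrict_mem measurableSet_Ioi).mono fun t (ht : 0 < t) => ?_
    simp only [norm_smul, Complex.norm_exp, Complex.neg_re, Complex.re_mul_ofReal,
      Real.norm_eq_abs, Real.abs_exp]
    gcongr
  refine (hasDerivAt_integral_of_dominated_loc_of_deriv_le
    (F' := fun w t => (Complex.exp (-(w * t)) * -(t : ℂ)) • φ t)
    hhalf (.of_forall hmeas) hint ?_ ?_ (hφ.norm.const_mul (d - c)⁻¹) ?_).2.differentiableAt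
  · exact (by fun_prop : Continuous fun t : ℝ =>
      Complex.exp (-(z * t)) * -(t : ℂ)).aestronglyMeasurable.smul hφm
  · exact (ae_restrict_mem measurableSet_Ioi).mono fun t ht w hw =>
      norm_exp_neg_mul_smul_le hcd (le_of_lt hw) (le_of_lt ht) (φ t)
  · refine .of_forall fun t w _ => HasDerivAt.smul_const ?_ (φ t)
    simpa using ((hasDerivAt_id w).mul_const (t : ℂ)).neg.cexp

end AnalyticContinuation

section MellinExp

variable {s z : ℂ}

lemma isBigO_exp_neg_mul_atTop_rpow (hz : 0 < z.re) (b : ℝ) :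
    (fun t : ℝ => Complex.exp (-(z * t))) =O[atTop] fun t : ℝ => t ^ b := by
  refine .trans (.of_norm_le fun t => ?_) (isLittleO_exp_neg_mul_rpow_atTop hz b).isBigO
  simp [Complex.norm_exp]

lemma isBigO_exp_neg_mul_nhdsGT_zero (z : ℂ) :
    (fun t : ℝ => Complex.exp (-(z * t))) =O[𝓝[>] 0] fun _ => (1 : ℝ) := by
  have hcont : Continuous fun t : ℝ => Complex.exp (-(z * t)) := by fun_prop
  exact ((hcont.tendsto 0).mono_left nhdsWithin_le_nhds).isBigO_one ℝ

lemma locallyIntegrableOn_exp_neg_mul (z : ℂ) (S : Set ℝ) :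
    LocallyIntegrableOn (fun t : ℝ => Complex.exp (-(z * t))) S :=
  (by fun_prop : Continuous fun t : ℝ => Complex.exp (-(z * t))).locallyIntegrable
    |>.locallyIntegrableOn S

lemma mellinConvergent_exp_neg_mul (hs : 0 < s.re) (hz : 0 < z.re) :
    MellinConvergent (fun t : ℝ => Complex.exp (-(z * t))) s :=
  mellinConvergent_of_isBigO_rpow (locallyIntegrableOn_exp_neg_mul z _)
    (isBigO_exp_neg_mul_atTop_rpow hz _) (lt_add_one s.re)
    (by simpa using isBigO_exp_neg_mul_nhdsGT_zero z) hs

lemma differentiableAt_mellin_exp_neg_mul (hs : 0 < s.re) (hz : 0 < z.re) :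
    DifferentiableAt ℂ (fun w : ℂ => mellin (fun t : ℝ => Complex.exp (-(w * t))) s) z := by
  simp only [mellin, smul_eq_mul]
  have hφ : IntegrableOn (fun t : ℝ => Real.exp (-(z.re / 2 * t)) • (t : ℂ) ^ (s - 1)) (Ioi 0) := by
    refine (mellinConvergent_exp_neg_mul (z := (z.re / 2 : ℝ)) hs (by simpa)).congr_fun
      (fun t _ => ?_) measurableSet_Ioi
    simp [mul_comm]
  simpa only [smul_eq_mul, mul_comm] using
    differentiableAt_integral_exp_neg_mul_smul hφ (half_lt_self hz)

theorem mellin_exp_neg_mul (hs : 0 < s.re) (hz : 0 < z.re) :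
    mellin (fun t : ℝ => Complex.exp (-(z * t))) s = z ^ (-s) * Complex.Gamma s := by
  refine eqOn_re_pos_of_eq_on_ofReal_pos (fun w hw =>
      (differentiableAt_mellin_exp_neg_mul hs hw).differentiableWithinAt)
    (g := fun w => w ^ (-s) * Complex.Gamma s) (fun w hw => ?_) (fun r hr => ?_) hz
  · exact ((differentiableAt_id.cpow_const (.inl hw)).mul_const _).differentiableWithinAt
  · have harg : (r : ℂ).arg ≠ π := by
      simpa only [Complex.arg_ofReal_of_nonneg hr.le] using pi_ne_zero.symm
    rw [Complex.cpow_neg, ← Complex.inv_cpow _ _ harg, ← one_div]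
    exact Complex.integral_cpow_mul_exp_neg_mul_Ioi hs hr

theorem hasMellin_log_smul_exp_neg_mul (hs : 0 < s.re) (hz : 0 < z.re) :
    HasMellin (fun t : ℝ => Real.log t • Complex.exp (-(z * t))) s
      (z ^ (-s) * (deriv Complex.Gamma s - Complex.log z * Complex.Gamma s)) := by
  obtain ⟨hconv, hderiv⟩ := mellin_hasDerivAt_of_isBigO_rpow (locallyIntegrableOn_exp_neg_mul z _)
    (isBigO_exp_neg_mul_atTop_rpow hz _) (lt_add_one s.re)
    (by simpa using isBigO_exp_neg_mul_nhdsGT_zero z) hs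
  have hz0 : z ≠ 0 := by rintro rfl; simp at hz
  have hcpow : HasDerivAt (fun w : ℂ => z ^ (-w)) (z ^ (-s) * Complex.log z * -1) s :=
    (hasDerivAt_neg s).const_cpow (.inl hz0)
  have hs_ne (m : ℕ) : s ≠ -m := by
    rintro rfl
    exact hs.not_ge (by simp)
  have hGamma : HasDerivAt Complex.Gamma (deriv Complex.Gamma s) s :=
    (Complex.differentiableAt_Gamma s hs_ne).hasDerivAt
  have hformula : mellin (fun t : ℝ => Complex.exp (-(z * t))) =ᶠ[𝓝 s]
      fun w => z ^ (-w) * Complex.Gamma w :=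
    ((Complex.isOpen_re_gt 0).eventually_mem hs).mono fun w hw => mellin_exp_neg_mul hw hz
  refine ⟨hconv, (hderiv.unique ((hcpow.mul hGamma).congr_of_eventuallyEq hformula)).trans ?_⟩
  ring

end MellinExp

section FourierIntegral

lemma integral_eq_integral_Ioi_add_integral_Ioi_comp_neg {E : Type*} [NormedAddCommGroup E]
    [NormedSpace ℝ E] {f : ℝ → E} (hpos : IntegrableOn f (Ioi 0))
    (hneg : IntegrableOn (fun t => f (-t)) (Ioi 0)) :
    ∫ t, f t = (∫ t in Ioi 0, f t) + ∫ t in Ioi 0, f (-t) := by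
  have hIic : IntegrableOn f (Iic 0) := by
    rw [integrableOn_Iic_iff_integrableOn_Iio]
    simpa using hneg.comp_neg
  rw [integral_comp_neg_Ioi, neg_zero, add_comm, intervalIntegral.integral_Iic_add_Ioi hIic hpos]

lemma fourier_integrand_eq_mellin_integrand (a y : ℝ) (s : ℂ) {t : ℝ} (ht : 0 < t) :
    Complex.exp (-(Complex.I * t * y)) * Real.exp (-(a * |t|)) * (|t| : ℝ) ^ (s - 1) *
        Real.log |t| =
      (t : ℂ) ^ (s - 1) • Real.log t • Complex.exp (-((a + y * Complex.I) * t)) := by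
  have hexp : Complex.exp (-((a + y * Complex.I) * t)) =
      Complex.exp (-(Complex.I * t * y)) * Real.exp (-(a * t)) := by
    rw [Complex.ofReal_exp, ← Complex.exp_add]
    push_cast
    ring_nf
  rw [abs_of_pos ht, hexp, smul_eq_mul, Complex.real_smul]
  ring

theorem integral_fourier_exp_neg_mul_abs_mul_cpow_mul_log {a : ℝ} (ha : 0 < a) {s : ℂ}
    (hs : 0 < s.re) (x : ℝ) :
    ∫ t : ℝ, Complex.exp (-(Complex.I * t * x)) * Real.exp (-(a * |t|)) * (|t| : ℝ) ^ (s - 1) *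
        Real.log |t| =
      (a + x * Complex.I) ^ (-s) *
          (deriv Complex.Gamma s - Complex.log (a + x * Complex.I) * Complex.Gamma s) +
        (a + (-x : ℝ) * Complex.I) ^ (-s) *
          (deriv Complex.Gamma s - Complex.log (a + (-x : ℝ) * Complex.I) * Complex.Gamma s) := by
  set f : ℝ → ℝ → ℂ := fun y t => Complex.exp (-(Complex.I * t * y)) * Real.exp (-(a * |t|)) *
    (|t| : ℝ) ^ (s - 1) * Real.log |t| with hf
  have hcongr (y : ℝ) : EqOn (fun t : ℝ => (t : ℂ) ^ (s - 1) •
      Real.log t • Complex.exp (-((a + y * Complex.I) * t))) (f y) (Ioi 0) := fun t ht =>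
    (fourier_integrand_eq_mellin_integrand a y s ht).symm
  have hmellin (y : ℝ) := hasMellin_log_smul_exp_neg_mul (z := a + y * Complex.I) hs (by simpa)
  have hint (y : ℝ) : IntegrableOn (f y) (Ioi 0) :=
    (hmellin y).1.congr_fun (hcongr y) measurableSet_Ioi
  have hneg : (fun t => f x (-t)) = f (-x) := by
    ext t
    simp [hf]
  rw [integral_eq_integral_Ioi_add_integral_Ioi_comp_neg (hint x) (hneg ▸ hint (-x)), hneg,
    ← (hmellin x).2, ← (hmellin (-x)).2]
  exact congrArg₂ _ (setIntegral_congr_fun measurableSet_Ioi (hcongr x).symm)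
    (setIntegral_congr_fun measurableSet_Ioi (hcongr (-x)).symm)

end FourierIntegral

section CauchyPoint

lemma arg_eq_arctan_of_re_pos {z : ℂ} (hz : 0 < z.re) :
    z.arg = Real.arctan (z.im / z.re) := by
  have hbound := abs_lt.1 (Complex.abs_arg_lt_pi_div_two_iff.2 (.inl hz))
  rw [← Complex.tan_arg, Real.arctan_tan hbound.1 hbound.2]

lemma log_one_add_mul_I (x : ℝ) :
    Complex.log (1 + x * Complex.I) = Real.log (1 + x ^ 2) / 2 + Real.arctan x * Complex.I := by
  have hnorm : ‖(1 + x * Complex.I : ℂ)‖ = √(1 + x ^ 2) := by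
    simpa using Complex.norm_add_mul_I 1 x
  have harg : (1 + x * Complex.I : ℂ).arg = Real.arctan x := by
    simpa using arg_eq_arctan_of_re_pos (z := 1 + x * Complex.I) (by simp)
  rw [Complex.log, hnorm, harg, Real.log_sqrt (by positivity)]
  simp only [Complex.ofReal_div, Complex.ofReal_ofNat]

lemma one_add_mul_I_cpow_neg_two (x : ℝ) :
    (1 + x * Complex.I) ^ (-2 : ℂ) = (1 - x * Complex.I) ^ 2 / (1 + (x : ℂ) ^ 2) ^ 2 := by
  have hmul : (1 + x * Complex.I) * (1 - x * Complex.I) = 1 + (x : ℂ) ^ 2 := by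
    linear_combination -(x : ℂ) ^ 2 * Complex.I_sq
  have hne : (1 - x * Complex.I : ℂ) ≠ 0 := fun h => by simpa using congrArg Complex.re h
  rw [Complex.cpow_neg, Complex.cpow_ofNat, ← hmul, mul_pow, inv_eq_one_div]
  field_simp

lemma deriv_Gamma_two : deriv Complex.Gamma 2 = 1 - Real.eulerMascheroniConstant := by
  simpa [one_add_one_eq_two, neg_add_eq_sub] using Complex.deriv_Gamma_nat 1

lemma integral_fourier_exp_neg_abs_mul_abs_mul_log (x : ℝ) :
    ∫ t : ℝ, Complex.exp (-(Complex.I * t * x)) * (Real.exp (-|t|) : ℂ) * ((|t| : ℝ) : ℂ) *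
        ((Real.log |t| : ℝ) : ℂ) =
      -2 * ((1 - x ^ 2) * (1 / 2 * Real.log (1 + x ^ 2) - 1 + Real.eulerMascheroniConstant) +
        2 * x * Real.arctan x) / (1 + (x : ℂ) ^ 2) ^ 2 := by
  have h := integral_fourier_exp_neg_mul_abs_mul_cpow_mul_log one_pos (s := 2) (by simp) x
  have hexponent : (2 - 1 : ℂ) = 1 := by norm_num
  have hGamma : Complex.Gamma 2 = 1 := by simp
  simp only [hexponent, Complex.cpow_one, one_mul, Complex.ofReal_one] at h
  rw [h, one_add_mul_I_cpow_neg_two, one_add_mul_I_cpow_neg_two, log_one_add_mul_I,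
    log_one_add_mul_I, Real.arctan_neg, neg_sq, hGamma, deriv_Gamma_two]
  simp only [Complex.ofReal_neg]
  linear_combination (4 * x * Real.arctan x - x ^ 2 * (Real.log (1 + x ^ 2) +
    2 * Real.eulerMascheroniConstant - 2)) / (1 + (x : ℂ) ^ 2) ^ 2 * Complex.I_sq

end CauchyPoint

/-- `−(1/(2π)) ∫ e^{−itx} e^{−|t|} |t| log|t| dt
  = [((1−x²)/(1+x²))((1/2)log(1+x²) − 1 + γ) + (2x/(1+x²)) arctan x] · (1/(π(1+x²)))`;
equivalently the MLE `α`-score at the Cauchy point equals the bracketed expression. -/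
theorem stmt5 (x : ℝ) :
    -(1 / (2 * (π : ℂ))) * ∫ t : ℝ,
        Complex.exp (-(Complex.I * t * x)) * (Real.exp (-|t|) : ℂ) * ((|t| : ℝ) : ℂ)
          * ((Real.log |t| : ℝ) : ℂ)
      = ((((1 - x ^ 2) / (1 + x ^ 2)) * ((1 / 2) * Real.log (1 + x ^ 2) - 1
              + Real.eulerMascheroniConstant)
            + (2 * x / (1 + x ^ 2)) * Real.arctan x) * (1 / (π * (1 + x ^ 2))) : ℝ) ∧
    -(1 / (2 * (π : ℂ) * ((1 / (π * (1 + x ^ 2)) : ℝ) : ℂ))) * ∫ t : ℝ,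
        Complex.exp (-(Complex.I * t * x)) * (Real.exp (-|t|) : ℂ) * ((|t| : ℝ) : ℂ)
          * ((Real.log |t| : ℝ) : ℂ)
      = ((((1 - x ^ 2) / (1 + x ^ 2)) * ((1 / 2) * Real.log (1 + x ^ 2) - 1
              + Real.eulerMascheroniConstant)
            + (2 * x / (1 + x ^ 2)) * Real.arctan x : ℝ) : ℂ) := by
  have hx : (1 + (x : ℂ) ^ 2) ≠ 0 := mod_cast (by positivity : 1 + x ^ 2 ≠ 0)
  have hπ : (π : ℂ) ≠ 0 := mod_cast pi_ne_zero
  rw [integral_fourier_exp_neg_abs_mul_abs_mul_log]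
  constructor <;> (push_cast; field_simp)
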